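/- arXiv:1301.6968 — 8 statements merged into one kernel-verified Lean document; each statement's English description precedes it below -/
import Mathlib

section
/- Let 𝒜 be an abelian category, let A and B be simple objects of 𝒜, let r be a natural number, and let E be an object fitting into a short exact sequence 0 → A → E → B^{⊕r} → 0 such that every morphism B → E is zero. Then every quotient of E other than E itself is a direct sum of copies of B: for every epimorphism q : E → N which is not an isomorphism, there is a natural number r' ≤ r with N ≅ B^{⊕r'}. -/
open CategoryTheory CategoryTheory.Limits

attribute [local instance] CategoryTheory.Abelian.hasFiniteBiproducts

lemma aux_quot {𝒜 : Type*} [Category 𝒜] [Abelian 𝒜] (B N : 𝒜) [Simple B] (r : ℕ)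
    (p : (⨁ fun _ : Fin r => B) ⟶ N) (hp : Epi p) :
    ∃ r' : ℕ, r' ≤ r ∧ Nonempty (N ≅ ⨁ fun _ : Fin r' => B) := by
  induction r with
  | zero =>
    refine ⟨0, le_rfl, ?_⟩
    have : Mono p := Preadditive.mono_of_cancel_zero _ (fun h _ => by
      apply biproduct.hom_ext
      intro j
      exact j.elim0)
    have : IsIso p := isIso_of_mono_of_epi p
    exact ⟨(asIso p).symm⟩
  | succ n ih =>
    by_cases hm : Mono p
    · have : IsIso p := isIso_of_mono_of_epi p
      exact ⟨n + 1, le_rfl, ⟨(asIso p).symm⟩⟩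
    · have hk : kernel.ι p ≠ 0 := fun h => hm (Preadditive.mono_of_kernel_zero h)
      have : ∃ i, kernel.ι p ≫ biproduct.π _ i ≠ 0 := by
        by_contra! hc
        apply hk
        apply biproduct.hom_ext
        intro j
        rw [hc j, zero_comp]
      obtain ⟨i, hi⟩ := this
      have hepi := epi_of_nonzero_to_simple hi
      let p' : (⨁ fun _ : Fin n => B) ⟶ N :=
        biproduct.desc fun j => biproduct.ι (fun _ : Fin (n+1) => B) (i.succAbove j) ≫ p
      have hp' : Epi p' := by
        apply Preadditive.epi_of_cancel_zero
        intro X h hh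
        have h1 : ∀ j, biproduct.ι (fun _ : Fin (n+1) => B) (i.succAbove j) ≫ p ≫ h = 0 := by
          intro j
          have := biproduct.ι (fun _ : Fin n => B) j ≫= hh
          simpa [p'] using this
        have h2 : p ≫ h = biproduct.π _ i ≫ biproduct.ι (fun _ : Fin (n+1) => B) i ≫ p ≫ h := by
          apply biproduct.hom_ext'
          intro j
          rcases Fin.eq_self_or_eq_succAbove i j with rfl | ⟨k, rfl⟩
          · simp
          · rw [h1, biproduct.ι_π_ne_assoc _ (Fin.succAbove_ne i k), zero_comp]
        have h3 := kernel.ι p ≫= h2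
        rw [kernel.condition_assoc, zero_comp, ← Category.assoc] at h3
        have h4 := zero_of_epi_comp _ h3.symm
        rw [h4, comp_zero] at h2
        exact (cancel_epi p).1 (by rw [h2, comp_zero])
      obtain ⟨r', h, e⟩ := ih p' hp'
      exact ⟨r', by omega, e⟩

lemma aux_sub {𝒜 : Type*} [Category 𝒜] [Abelian 𝒜] (B K : 𝒜) [Simple B] (r : ℕ)
    (m : K ⟶ ⨁ fun _ : Fin r => B) (hm : Mono m) (hB : ∀ b : B ⟶ K, b = 0) : 𝟙 K = 0 := by
  induction r with
  | zero =>
    apply (cancel_mono m).1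
    apply biproduct.hom_ext
    intro j
    exact j.elim0
  | succ n ih =>
    let m' : K ⟶ ⨁ fun _ : Fin n => B := biproduct.lift fun j => m ≫ biproduct.π _ j.succ
    apply ih m'
    by_contra hc
    have hk : kernel.ι m' ≠ 0 := fun h => hc (Preadditive.mono_of_kernel_zero h)
    have hz : ∀ j : Fin n, kernel.ι m' ≫ m ≫ biproduct.π _ j.succ = 0 := by
      intro j
      have := kernel.condition m' =≫ biproduct.π _ j
      rwa [Category.assoc, biproduct.lift_π, zero_comp] at this
    let t := kernel.ι m' ≫ m ≫ biproduct.π _ 0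
    have key : ∀ {X : 𝒜} (h : X ⟶ kernel m'), h ≫ t = 0 → h = 0 := by
      intro X h hh
      rw [← cancel_mono (kernel.ι m'), ← cancel_mono m]
      apply biproduct.hom_ext
      intro j
      refine Fin.cases ?_ (fun j => ?_) j
      · simpa [t] using hh
      · simp [hz j]
    have : Mono t := Preadditive.mono_of_cancel_zero _ (fun h => key h)
    have ht : t ≠ 0 := by
      intro ht
      have := key (𝟙 _) (by rw [ht, comp_zero])
      exact hk (by rw [← Category.id_comp (kernel.ι m'), this, zero_comp])
    have := isIso_of_mono_of_nonzero ht
    have h := hB (inv t ≫ kernel.ι m')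
    rw [IsIso.inv_comp_eq, comp_zero] at h
    exact hk h

/-- first half of Lemma 6.9 of Bayer–Macrì.
Let `𝒜` be an abelian category, `A`, `B` simple objects, and
`0 → A → E → B^{⊕r} → 0` a short exact sequence such that every morphism
`B ⟶ E` is zero. Then every quotient of `E` other than `E` itself is
isomorphic to `B^{⊕r'}` for some `r' ≤ r`. -/
theorem stmt_0 {𝒜 : Type*} [Category 𝒜] [Abelian 𝒜]
    (A B E : 𝒜) [Simple A] [Simple B] (r : ℕ)
    (f : A ⟶ E) (g : E ⟶ ⨁ fun _ : Fin r => B)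
    (w : f ≫ g = 0)
    (hse : (ShortComplex.mk f g w).ShortExact)
    (hhom : ∀ φ : B ⟶ E, φ = 0)
    (N : 𝒜) (q : E ⟶ N) (hq : Epi q) (hq' : ¬ IsIso q) :
    ∃ r' : ℕ, r' ≤ r ∧ Nonempty (N ≅ ⨁ fun _ : Fin r' => B) := by
  have hfm : Mono f := hse.mono_f
  have hge : Epi g := hse.epi_g
  by_cases hfq : f ≫ q = 0
  · let p := hse.exact.desc q hfq
    have hp : g ≫ p = q := hse.exact.g_desc q hfq
    have : Epi p := by
      have : Epi (g ≫ p) := by rw [hp]; exact hq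
      exact epi_of_epi g p
    exact aux_quot B N r p this
  · exfalso
    have hmono : Mono (f ≫ q) := mono_of_nonzero_from_simple hfq
    have hmk : Mono (kernel.ι q ≫ g) := by
      apply Preadditive.mono_of_cancel_zero
      intro X h hh
      have h1 : (h ≫ kernel.ι q) ≫ g = 0 := by simpa using hh
      let l := hse.exact.lift (h ≫ kernel.ι q) h1
      have hl : l ≫ f = h ≫ kernel.ι q := hse.exact.lift_f _ h1
      have h2 : l ≫ f ≫ q = 0 := by
        rw [← Category.assoc, hl, Category.assoc, kernel.condition, comp_zero]
      have h3 : l = 0 := zero_of_comp_mono _ h2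
      rw [h3, zero_comp] at hl
      exact zero_of_comp_mono _ hl.symm
    have h := aux_sub B (kernel q) r _ hmk (fun b => zero_of_comp_mono (kernel.ι q) (hhom _))
    apply hq'
    have : Mono q := Preadditive.mono_of_kernel_zero (by
      rw [← Category.id_comp (kernel.ι q), h, zero_comp])
    exact isIso_of_mono_of_epi q
end

section
/- Let 𝒜 be an abelian category, let A and B be simple objects of 𝒜, let r be a natural number, and let E be an object fitting into a short exact sequence 0 → A^{⊕r} → E → B → 0 such that every morphism E → A is zero. Then every subobject of E other than E itself is a direct sum of copies of A: for every monomorphism N → E which is not an isomorphism, there is a natural number r' ≤ r with N ≅ A^{⊕r'}. -/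
open CategoryTheory CategoryTheory.Limits

attribute [local instance] CategoryTheory.Abelian.hasFiniteBiproducts

theorem aux_quot_s1 {𝒜 : Type*} [Category 𝒜] [Abelian 𝒜] (A : 𝒜) [Simple A] (r : ℕ) :
    ∀ (C : 𝒜) (a : Fin r → (A ⟶ C))
      (_ : ∀ (Z : 𝒜) (h : C ⟶ Z), (∀ j, a j ≫ h = 0) → h = 0)
      (_ : 𝟙 C ≠ 0), ∃ φ : C ⟶ A, φ ≠ 0 := by
  induction r with
  | zero => intro C a ha hC; exact absurd (ha _ (𝟙 C) (fun j => j.elim0)) hC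
  | succ r ih =>
    intro C a ha hC
    by_cases hD : 𝟙 (cokernel (a 0)) = 0
    · have hπ : cokernel.π (a 0) = 0 := by
        rw [← Category.comp_id (cokernel.π (a 0)), hD, comp_zero]
      have : Epi (a 0) := Abelian.epi_of_cokernel_π_eq_zero _ hπ
      have hne : a 0 ≠ 0 := by
        intro h0
        apply hC
        rw [← cancel_epi (a 0), h0, zero_comp, zero_comp]
      have : IsIso (a 0) := isIso_of_epi_of_nonzero hne
      refine ⟨inv (a 0), fun h => id_nonzero A ?_⟩
      rw [← IsIso.hom_inv_id (a 0), h, comp_zero]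
    · obtain ⟨φ, hφ⟩ := ih (cokernel (a 0)) (fun j => a j.succ ≫ cokernel.π (a 0)) (by
        intro Z h hh
        rw [← cancel_epi (cokernel.π (a 0)), comp_zero]
        apply ha
        intro j
        refine Fin.cases ?_ (fun j => ?_) j
        · simp
        · simpa using hh j) hD
      refine ⟨cokernel.π (a 0) ≫ φ, fun h => hφ ?_⟩
      rw [← cancel_epi (cokernel.π (a 0)), h, comp_zero]

theorem aux_sub_s1 {𝒜 : Type*} [Category 𝒜] [Abelian 𝒜] (A : 𝒜) [Simple A] (K : 𝒜) (r : ℕ) :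
    ∀ (b : Fin r → (K ⟶ A))
      (_ : ∀ (Z : 𝒜) (h : Z ⟶ K), (∀ j, h ≫ b j = 0) → h = 0),
      ∃ r' : ℕ, r' ≤ r ∧ Nonempty (K ≅ ⨁ fun _ : Fin r' => A) := by
  induction r with
  | zero =>
    intro b hb
    refine ⟨0, le_rfl, ⟨⟨0, 0, ?_, ?_⟩⟩⟩
    · rw [hb _ (𝟙 K) (fun j => j.elim0), zero_comp]
    · apply biproduct.hom_ext
      intro j
      exact j.elim0
  | succ r ih =>
    intro b hb
    let k : K ⟶ ⨁ fun _ : Fin (r+1) => A := biproduct.lift b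
    have hk : ∀ j, k ≫ biproduct.π (fun _ : Fin (r+1) => A) j = b j := fun j =>
      biproduct.lift_π _ _
    have hm : Mono k := Preadditive.mono_of_cancel_zero _ (fun {Z} h hh => hb Z h (fun j => by
      rw [← hk j, ← Category.assoc, hh, zero_comp]))
    by_cases hD : 𝟙 (cokernel k) = 0
    · have hπ : cokernel.π k = 0 := by
        rw [← Category.comp_id (cokernel.π k), hD, comp_zero]
      have : Epi k := Abelian.epi_of_cokernel_π_eq_zero _ hπ
      have : IsIso k := isIso_of_mono_of_epi k
      exact ⟨r+1, le_rfl, ⟨asIso k⟩⟩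
    · obtain ⟨φ, hφ⟩ := aux_quot_s1 A (r+1) (cokernel k)
        (fun j => biproduct.ι (fun _ : Fin (r+1) => A) j ≫ cokernel.π k) (by
          intro Z h hh
          rw [← cancel_epi (cokernel.π k), comp_zero]
          apply biproduct.hom_ext'
          intro j
          simpa using hh j) hD
      let ψ := cokernel.π k ≫ φ
      have hψ : ψ ≠ 0 := by
        intro h
        apply hφ
        rw [← cancel_epi (cokernel.π k), comp_zero]
        exact h
      have hkψ : k ≫ ψ = 0 := by simp [ψ]
      have hj : ∃ j, biproduct.ι (fun _ : Fin (r+1) => A) j ≫ ψ ≠ 0 := by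
        by_contra! hall
        apply hψ
        apply biproduct.hom_ext'
        intro j
        rw [hall j, comp_zero]
      obtain ⟨j, hj⟩ := hj
      have hmono : Mono (biproduct.ι (fun _ : Fin (r+1) => A) j ≫ ψ) :=
        Preadditive.mono_of_kernel_zero (kernel_zero_of_nonzero_from_simple hj)
      have hsum : ∑ l, b l ≫ biproduct.ι (fun _ : Fin (r+1) => A) l ≫ ψ = 0 := by
        rw [← hkψ]
        have hkk : k = ∑ l, b l ≫ biproduct.ι (fun _ : Fin (r+1) => A) l :=
          biproduct.lift_eq
        rw [hkk, Preadditive.sum_comp]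
        simp
      obtain ⟨r', hr', hiso⟩ := ih (fun l => b (j.succAbove l)) (by
        intro Z h hh
        apply hb
        have hj0 : h ≫ b j = 0 := by
          rw [← cancel_mono (biproduct.ι (fun _ : Fin (r+1) => A) j ≫ ψ), zero_comp]
          have h2 : h ≫ ∑ l, b l ≫ biproduct.ι (fun _ : Fin (r+1) => A) l ≫ ψ = 0 := by
            rw [hsum, comp_zero]
          rw [Preadditive.comp_sum, Fin.sum_univ_succAbove _ j] at h2
          rw [Finset.sum_eq_zero, add_zero] at h2
          · rw [Category.assoc]; exact h2
          · intro l _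
            rw [← Category.assoc, hh l, zero_comp]
        intro l
        rcases Fin.eq_self_or_eq_succAbove j l with h1 | ⟨m, rfl⟩
        · rw [h1, hj0]
        · exact hh m)
      exact ⟨r', by omega, hiso⟩

/-- second half of Lemma 6.9 of Bayer–Macrì.
Let `𝒜` be an abelian category, `A`, `B` simple objects, and
`0 → A^{⊕r} → E → B → 0` a short exact sequence such that every morphism
`E ⟶ A` is zero. Then every subobject of `E` other than `E` itself is
isomorphic to `A^{⊕r'}` for some `r' ≤ r`. -/
theorem stmt_1 {𝒜 : Type*} [Category 𝒜] [Abelian 𝒜]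
    (A B E : 𝒜) [Simple A] [Simple B] (r : ℕ)
    (f : (⨁ fun _ : Fin r => A) ⟶ E) (g : E ⟶ B)
    (w : f ≫ g = 0)
    (hse : (ShortComplex.mk f g w).ShortExact)
    (hhom : ∀ φ : E ⟶ A, φ = 0)
    (N : 𝒜) (i : N ⟶ E) (hi : Mono i) (hi' : ¬ IsIso i) :
    ∃ r' : ℕ, r' ≤ r ∧ Nonempty (N ≅ ⨁ fun _ : Fin r' => A) := by
  have hf : Mono f := hse.mono_f
  by_cases hg : i ≫ g = 0
  · let k : N ⟶ ⨁ fun _ : Fin r => A := hse.exact.lift i hg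
    have hk : k ≫ f = i := hse.exact.lift_f i hg
    have hkm : Mono k := by
      have : Mono (k ≫ f) := by rw [hk]; exact hi
      exact mono_of_mono k f
    refine aux_sub_s1 A N r (fun j => k ≫ biproduct.π (fun _ : Fin r => A) j) ?_
    intro Z h hh
    rw [← cancel_mono k, zero_comp]
    apply biproduct.hom_ext
    intro j
    simpa using hh j
  · exfalso
    have hepi : Epi (i ≫ g) := epi_of_nonzero_to_simple hg
    by_cases hD : 𝟙 (cokernel i) = 0
    · have hπ : cokernel.π i = 0 := by
        rw [← Category.comp_id (cokernel.π i), hD, comp_zero]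
      have : Epi i := Abelian.epi_of_cokernel_π_eq_zero _ hπ
      exact hi' (isIso_of_mono_of_epi i)
    · obtain ⟨φ, hφ⟩ := aux_quot_s1 A r (cokernel i)
        (fun j => biproduct.ι (fun _ : Fin r => A) j ≫ f ≫ cokernel.π i) (by
          intro Z h hh
          have hfh : f ≫ cokernel.π i ≫ h = 0 := by
            apply biproduct.hom_ext'
            intro j
            simpa using hh j
          have : Epi g := hse.epi_g
          let d : B ⟶ Z := hse.exact.desc (cokernel.π i ≫ h) hfh
          have hd : g ≫ d = cokernel.π i ≫ h := hse.exact.g_desc _ hfh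
          have hd0 : d = 0 := by
            rw [← cancel_epi (i ≫ g), Category.assoc, hd]
            simp
          rw [← cancel_epi (cokernel.π i), ← hd, hd0, comp_zero, comp_zero]) hD
      apply hφ
      rw [← cancel_epi (cokernel.π i), comp_zero]
      exact hhom _
end

section
/- Let 𝒜 be an abelian category and S an object of 𝒜 which is Noetherian, i.e. every ascending chain of subobjects of S stabilizes. Let T be a subobject of S such that T is a simple object. Then there exists a subobject T̃ of S with the following two properties: (a) T̃ admits a finite filtration 0 = T₀ ⊆ T₁ ⊆ ⋯ ⊆ T_k = T̃ by subobjects, with k ≥ 1, whose successive quotients T_i/T_{i−1} are all isomorphic to T (so T̃ is an iterated self-extension of T); and (b) every morphism T → S/T̃ is zero. -/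
open CategoryTheory CategoryTheory.Limits

lemma stmt_2_step {𝒜 : Type*} [Category 𝒜] [Abelian 𝒜] {S T : 𝒜} [Simple T]
    (P : Subobject S) (ψ : T ⟶ cokernel P.arrow) (hψ : ψ ≠ 0) :
    ∃ (Q : Subobject S) (h : P ≤ Q), Nonempty (cokernel (Subobject.ofLE P Q h) ≅ T) := by
  have : Mono ψ := mono_of_nonzero_from_simple hψ
  let f := pullback.fst (cokernel.π P.arrow) ψ
  let Q := Subobject.mk f
  let q : (Q : 𝒜) ⟶ T := (Subobject.underlyingIso f).hom ≫ pullback.snd (cokernel.π P.arrow) ψ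
  have hq : q ≫ ψ = Q.arrow ≫ cokernel.π P.arrow := by
    simp only [q, Q, Category.assoc]
    rw [← pullback.condition, ← Category.assoc, Subobject.underlyingIso_hom_comp_eq_mk]
  have : Epi q := epi_comp _ _
  have h : P ≤ Q := Subobject.le_mk_of_comm
    (pullback.lift P.arrow 0 (by simp)) (pullback.lift_fst _ _ _)
  refine ⟨Q, h, ?_⟩
  have w : Subobject.ofLE P Q h ≫ q = 0 := by
    rw [← cancel_mono ψ, Category.assoc, hq, ← Category.assoc, Subobject.ofLE_arrow]
    simp
  let sc := ShortComplex.mk _ _ w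
  have hex : sc.Exact := by
    apply ShortComplex.exact_of_f_is_kernel
    refine KernelFork.IsLimit.ofι' _ _ (fun {W} k hk => ?_)
    have hk' : (k ≫ Q.arrow) ≫ cokernel.π P.arrow = 0 := by
      rw [Category.assoc, ← hq, ← Category.assoc]
      have : k ≫ q = 0 := hk
      rw [this, zero_comp]
    refine ⟨Abelian.monoLift P.arrow (k ≫ Q.arrow) hk', ?_⟩
    change _ ≫ Subobject.ofLE P Q h = k
    rw [← cancel_mono Q.arrow, Category.assoc, Subobject.ofLE_arrow]
    exact Abelian.monoLift_comp _ _ _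
  have : Epi sc.g := ‹Epi q›
  exact ⟨(cokernelIsCokernel _).coconePointUniqueUpToIso hex.gIsCokernel⟩

/-- from the proof of Lemma 5.8 of Bayer–Macrì.
Let `𝒜` be an abelian category and `S` a Noetherian object (every ascending
chain of subobjects of `S` stabilizes). Let `T` be a simple subobject of `S`.
Then there is a subobject `T̃ ⊆ S` which is an iterated self-extension of `T`
(it has a finite filtration, of length at least one, starting at `0`, whose
successive quotients are isomorphic to `T`) and such that every morphism
`T ⟶ S/T̃` is zero. -/
theorem stmt_2 {𝒜 : Type*} [Category 𝒜] [Abelian 𝒜]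
    (S T : 𝒜) [Simple T]
    (hNoeth : ∀ c : ℕ →o Subobject S, ∃ n : ℕ, ∀ m : ℕ, n ≤ m → c m = c n)
    (ι : T ⟶ S) (hι : Mono ι) :
    ∃ (k : ℕ) (_ : 1 ≤ k) (F : Fin (k + 1) → 𝒜)
      (φ : ∀ i : Fin k, F i.castSucc ⟶ F i.succ)
      (j : F (Fin.last k) ⟶ S),
      Mono j ∧
      IsZero (F 0) ∧
      (∀ i : Fin k, Mono (φ i)) ∧
      (∀ i : Fin k, Nonempty (cokernel (φ i) ≅ T)) ∧
      (∀ ψ : T ⟶ cokernel j, ψ = 0) := by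
  classical
  have step : ∀ P : Subobject S, ∃ Q : Subobject S, P ≤ Q ∧ ((∃ ψ : T ⟶ cokernel P.arrow, ψ ≠ 0) →
      ∃ h : P ≤ Q, Nonempty (cokernel (Subobject.ofLE P Q h) ≅ T)) := by
    intro P
    by_cases hP : ∃ ψ : T ⟶ cokernel P.arrow, ψ ≠ 0
    · obtain ⟨ψ, hψ⟩ := hP
      obtain ⟨Q, h, e⟩ := stmt_2_step P ψ hψ
      exact ⟨Q, h, fun _ => ⟨h, e⟩⟩
    · exact ⟨P, le_rfl, fun h => absurd h hP⟩
  have hm1 : ∀ P : Subobject S, Mono P.arrow := fun P => inferInstance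
  have hm2 : ∀ (P Q : Subobject S) (h : P ≤ Q), Mono (Subobject.ofLE P Q h) :=
    fun P Q h => inferInstance
  choose next hle hnext using step
  let c : ℕ → Subobject S := fun n => Nat.rec ⊥ (fun _ P => next P) n
  have hc : ∀ n, c n ≤ c (n + 1) := fun n => hle (c n)
  have hgood : ∃ n, ¬ ∃ ψ : T ⟶ cokernel (c n).arrow, ψ ≠ 0 := by
    by_contra! hbad
    obtain ⟨n, hn⟩ := hNoeth ⟨c, monotone_nat_of_le_succ hc⟩
    obtain ⟨h, ⟨e⟩⟩ := hnext (c n) (hbad n)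
    have heq : next (c n) = c n := hn (n + 1) (Nat.le_succ n)
    have hz : IsZero (cokernel (Subobject.ofLE (c n) (next (c n)) h)) := by
      generalize next (c n) = Q at h heq
      subst heq
      rw [Subobject.ofLE_refl]
      exact isZero_cokernel_of_epi _
    exact Simple.not_isZero T (hz.of_iso e.symm)
  have hmin : ∀ m < Nat.find hgood, ∃ ψ : T ⟶ cokernel (c m).arrow, ψ ≠ 0 :=
    fun m hm => not_not.mp (Nat.find_min hgood hm)
  have hspec := Nat.find_spec hgood
  generalize Nat.find hgood = k at hmin hspec
  refine ⟨k, ?_, fun i => Subobject.underlying.obj (c i.val),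
    fun i => Subobject.ofLE (c i.val) (c (i.val + 1)) (hc _), (c k).arrow,
    ?_, ?_, ?_, ?_, ?_⟩
  · rw [Nat.one_le_iff_ne_zero]
    rintro rfl
    apply hspec
    refine ⟨ι ≫ cokernel.π _, fun h0 => Simple.not_isZero T ?_⟩
    have h1 : (c 0).arrow = 0 := Subobject.bot_arrow
    have : IsIso (cokernel.π (c 0).arrow) := by
      rw [h1]; infer_instance
    have : ι = 0 := by
      rw [← cancel_mono (cokernel.π (c 0).arrow), h0, zero_comp]
    exact IsZero.of_mono_eq_zero ι this
  · exact hm1 (c k)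
  · exact (isZero_zero 𝒜).of_iso Subobject.botCoeIsoZero
  · exact fun i => hm2 (c i.val) (c (i.val + 1)) (hc _)
  · intro i
    obtain ⟨h, e⟩ := hnext (c i.val) (hmin _ i.isLt)
    exact e
  · intro ψ
    by_contra h
    exact hspec ⟨ψ, h⟩
end

section
/- Let B be an integer-valued symmetric bilinear form on ℤ² such that B(u,u) is even for every u ∈ ℤ² and the determinant of the Gram matrix of B in the standard basis is negative (i.e. ℤ² is a rank-two even lattice of signature (1,−1)). Let v ∈ ℤ² satisfy B(v,v) > 0. Let l ≥ 2 and let a₁, …, a_l ∈ ℤ² be pairwise linearly independent vectors satisfying B(aᵢ,aᵢ) > 0 and B(v,aᵢ) > 0 for every i. Then, with a = a₁ + ⋯ + a_l, one has ∑_{i=1}^{l} (B(aᵢ,aᵢ) + 2) < B(a,a). -/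
theorem pair_aux (B : (ℤ × ℤ) →ₗ[ℤ] (ℤ × ℤ) →ₗ[ℤ] ℤ)
    (hsymm : ∀ u w : ℤ × ℤ, B u w = B w u)
    (heven : ∀ u : ℤ × ℤ, Even (B u u))
    (hdet : Matrix.det
      !![B (1, 0) (1, 0), B (1, 0) (0, 1); B (0, 1) (1, 0), B (0, 1) (0, 1)] < 0)
    (v x y : ℤ × ℤ) (hv : 0 < B v v)
    (hli : LinearIndependent ℤ ![x, y])
    (hx : 0 < B x x) (hy : 0 < B y y) (hvx : 0 < B v x) (hvy : 0 < B v y) :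
    3 ≤ B x y := by
  have key : ∀ u w : ℤ × ℤ, B u w = B (1,0) (1,0) * (u.1 * w.1)
      + B (1,0) (0,1) * (u.1 * w.2 + u.2 * w.1) + B (0,1) (0,1) * (u.2 * w.2) := by
    intro u w
    have hu : ∀ u : ℤ × ℤ, u = u.1 • ((1:ℤ),(0:ℤ)) + u.2 • ((0:ℤ),(1:ℤ)) := by
      intro u; ext <;> simp
    conv_lhs => rw [hu u, hu w]
    simp only [map_add, map_smul, LinearMap.add_apply, LinearMap.smul_apply, smul_eq_mul]
    rw [hsymm (0,1) (1,0)]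
    ring
  rw [Matrix.det_fin_two_of, hsymm (0,1) (1,0)] at hdet
  have hx2 : 2 ≤ B x x := by have := heven x; grind
  have hy2 : 2 ≤ B y y := by have := heven y; grind
  have hD : x.1 * y.2 - x.2 * y.1 ≠ 0 := by
    intro h
    rw [LinearIndependent.pair_iff] at hli
    have h1 := hli y.2 (-x.2) (by ext <;> simp <;> linarith)
    have h2 := hli y.1 (-x.1) (by ext <;> simp <;> linarith)
    have : x = 0 := by ext <;> simp <;> omega
    simp [this] at hx
  have hid : (B x y)^2 - B x x * B y y =
      (B (1,0) (0,1) * B (1,0) (0,1) - B (1,0) (1,0) * B (0,1) (0,1))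
        * (x.1 * y.2 - x.2 * y.1)^2 := by
    rw [key x y, key x x, key y y]; ring
  have hgram : B v v * (B x x * B y y - (B x y)^2) + 2 * (B v x * B v y) * B x y
      - B x x * (B v y)^2 - B y y * (B v x)^2 = 0 := by
    rw [key x y, key x x, key y y, key v v, key v x, key v y]; ring
  have hD2 : 0 < (x.1 * y.2 - x.2 * y.1)^2 := by positivity
  have hlt : 0 < (B x y)^2 - B x x * B y y := by
    rw [hid]; exact mul_pos (by linarith) hD2
  generalize B x y = c at *
  have hc : 0 < c := by
    by_contra hc
    have h1 : 0 < B v v * (c^2 - B x x * B y y) := mul_pos hv hlt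
    have h2 : 0 ≤ (B v x * B v y) * (-c) := mul_nonneg (by positivity) (by linarith)
    have h3 : 0 < B x x * (B v y)^2 := by positivity
    have h4 : 0 < B y y * (B v x)^2 := by positivity
    nlinarith
  by_contra h
  nlinarith

/-- Lemma 6.4 of Bayer–Macrì.
Let `B` be an even integral symmetric bilinear form on `ℤ²` of signature
`(1,−1)` (negative Gram determinant in the standard basis), let `v` satisfy
`B(v,v) > 0`, and let `a₁, …, a_l` (`l ≥ 2`) be pairwise linearly independent
vectors with `B(aᵢ,aᵢ) > 0` and `B(v,aᵢ) > 0`. Then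
`∑ (B(aᵢ,aᵢ) + 2) < B(a,a)` where `a = a₁ + ⋯ + a_l`. -/
theorem stmt_3
    (B : (ℤ × ℤ) →ₗ[ℤ] (ℤ × ℤ) →ₗ[ℤ] ℤ)
    (hsymm : ∀ u w : ℤ × ℤ, B u w = B w u)
    (heven : ∀ u : ℤ × ℤ, Even (B u u))
    (hdet : Matrix.det
      !![B (1, 0) (1, 0), B (1, 0) (0, 1); B (0, 1) (1, 0), B (0, 1) (0, 1)] < 0)
    (v : ℤ × ℤ) (hv : 0 < B v v)
    (l : ℕ) (hl : 2 ≤ l) (a : Fin l → ℤ × ℤ)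
    (hindep : ∀ i j : Fin l, i ≠ j → LinearIndependent ℤ ![a i, a j])
    (hpos : ∀ i : Fin l, 0 < B (a i) (a i))
    (hva : ∀ i : Fin l, 0 < B v (a i)) :
    ∑ i : Fin l, (B (a i) (a i) + 2) < B (∑ i : Fin l, a i) (∑ i : Fin l, a i) := by
  have h3 : ∀ i j : Fin l, i ≠ j → 3 ≤ B (a i) (a j) := fun i j hij =>
    pair_aux B hsymm heven hdet v (a i) (a j) hv (hindep i j hij) (hpos i) (hpos j)
      (hva i) (hva j)
  have hexp : B (∑ i : Fin l, a i) (∑ i : Fin l, a i) = ∑ i, ∑ j, B (a i) (a j) := by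
    rw [map_sum B, LinearMap.sum_apply]
    simp only [map_sum]
  rw [hexp]
  apply Finset.sum_lt_sum_of_nonempty
  · exact ⟨⟨0, by omega⟩, Finset.mem_univ _⟩
  intro i _
  have : Nontrivial (Fin l) := Fin.nontrivial_iff_two_le.mpr hl
  obtain ⟨k, hk⟩ := exists_ne i
  rw [← Finset.add_sum_erase _ _ (Finset.mem_univ i)]
  have h1 : B (a i) (a k) ≤ ∑ j ∈ Finset.univ.erase i, B (a i) (a j) := by
    apply Finset.single_le_sum (f := fun j => B (a i) (a j))
    · intro j hj
      have := h3 i j (Finset.ne_of_mem_erase hj).symm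
      linarith
    · simp [hk]
  have h2 := h3 i k hk.symm
  linarith
end

section
/- Let V be a real vector space with a symmetric bilinear form B, and let s₁, s₂ ∈ V with B(s₁,s₁) = B(s₂,s₂) = −2 and B(s₁,s₂) ≥ 3. Then there is no vector s₃ lying in the span of s₁ and s₂ such that B(s₃,s₃) = −2, B(s₁,s₃) ≥ 0 and B(s₂,s₃) ≥ 0. Equivalently, writing s₃ = x·s₁ + y·s₂ with x, y ∈ ℝ and m = B(s₁,s₂) ≥ 3: if −2x + my ≥ 0 and mx − 2y ≥ 0, then −2x² + 2mxy − 2y² ≥ 0, with equality only for x = y = 0; in particular −2x² + 2mxy − 2y² ≠ −2 in that region. -/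
theorem aux_region (m x y : ℝ) (hm : 3 ≤ m) (hp : 0 ≤ -2 * x + m * y) (hq : 0 ≤ m * x - 2 * y) :
    0 ≤ -2 * x ^ 2 + 2 * m * x * y - 2 * y ^ 2 ∧
      (-2 * x ^ 2 + 2 * m * x * y - 2 * y ^ 2 = 0 → x = 0 ∧ y = 0) := by
  have hd : 0 < m ^ 2 - 4 := by nlinarith
  have hpq := mul_nonneg (by linarith : (0:ℝ) ≤ m) (mul_nonneg hp hq)
  have key : (m ^ 2 - 4) * (-2 * x ^ 2 + 2 * m * x * y - 2 * y ^ 2) =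
      2 * (-2 * x + m * y) ^ 2 + 2 * (m * ((-2 * x + m * y) * (m * x - 2 * y)))
        + 2 * (m * x - 2 * y) ^ 2 := by ring
  constructor
  · refine nonneg_of_mul_nonneg_right ?_ hd
    rw [key]; positivity
  · intro h
    rw [h, mul_zero] at key
    have p0 : -2 * x + m * y = 0 := by
      apply pow_eq_zero_iff (two_ne_zero) |>.1
      nlinarith [sq_nonneg (-2 * x + m * y), sq_nonneg (m * x - 2 * y)]
    have q0 : m * x - 2 * y = 0 := by
      apply pow_eq_zero_iff (two_ne_zero) |>.1
      nlinarith [sq_nonneg (-2 * x + m * y), sq_nonneg (m * x - 2 * y)]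
    constructor
    · have : (m ^ 2 - 4) * x = 0 := by linear_combination 2 * p0 + m * q0
      exact (mul_eq_zero.1 this).resolve_left hd.ne'
    · have : (m ^ 2 - 4) * y = 0 := by linear_combination m * p0 + 2 * q0
      exact (mul_eq_zero.1 this).resolve_left hd.ne'

/-- lattice-theoretic heart of Proposition 6.3 of
Bayer–Macrì. Let `V` be a real vector space with a symmetric bilinear form
`B`, and let `s₁, s₂` satisfy `B(s₁,s₁) = B(s₂,s₂) = −2` and `B(s₁,s₂) ≥ 3`.
Then no vector `s₃` in the span of `s₁, s₂` has `B(s₃,s₃) = −2`,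
`B(s₁,s₃) ≥ 0` and `B(s₂,s₃) ≥ 0`. Equivalently, with `m = B(s₁,s₂)`:
if `−2x + my ≥ 0` and `mx − 2y ≥ 0` then
`−2x² + 2mxy − 2y² ≥ 0`, with equality only for `x = y = 0`. -/
theorem stmt_5 {V : Type*} [AddCommGroup V] [Module ℝ V]
    (B : V →ₗ[ℝ] V →ₗ[ℝ] ℝ) (hsymm : ∀ x y : V, B x y = B y x)
    (s₁ s₂ : V) (h1 : B s₁ s₁ = -2) (h2 : B s₂ s₂ = -2) (hm : 3 ≤ B s₁ s₂) :
    (¬ ∃ s₃ ∈ Submodule.span ℝ ({s₁, s₂} : Set V),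
        B s₃ s₃ = -2 ∧ 0 ≤ B s₁ s₃ ∧ 0 ≤ B s₂ s₃) ∧
    (∀ x y : ℝ, 0 ≤ -2 * x + (B s₁ s₂) * y → 0 ≤ (B s₁ s₂) * x - 2 * y →
      0 ≤ -2 * x ^ 2 + 2 * (B s₁ s₂) * x * y - 2 * y ^ 2 ∧
      (-2 * x ^ 2 + 2 * (B s₁ s₂) * x * y - 2 * y ^ 2 = 0 → x = 0 ∧ y = 0)) := by
  refine ⟨?_, fun x y hp hq => aux_region _ x y hm hp hq⟩
  rintro ⟨s₃, hs, h3, hp, hq⟩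
  obtain ⟨x, y, rfl⟩ := Submodule.mem_span_pair.1 hs
  have h21 := hsymm s₂ s₁
  simp only [map_add, map_smul, LinearMap.add_apply, LinearMap.smul_apply, smul_eq_mul,
    h1, h2, h21] at h3 hp hq
  have := (aux_region (B s₁ s₂) x y hm (by linarith) (by linarith)).1
  nlinarith
end

section
/- Fix an integer m ≥ 3 and equip ℤ² with the bilinear form B with Gram matrix ((−2, m),(m, −2)) in the basis s = (1,0), t = (0,1). Define the reflections ρ_s(w) = w + B(w,s)·s and ρ_t(w) = w + B(w,t)·t; these are B-preserving linear involutions of ℤ². Let G be the subgroup of linear automorphisms of ℤ² generated by ρ_s and ρ_t. Then for every v = (x,y) ∈ ℤ² with B(v,v) > 0 and x > 0, the orbit G·v contains exactly one element v₀ satisfying both B(v₀, s) ≥ 0 and B(v₀, t) ≥ 0. -/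
def RR (m : ℤ) (b : Bool) (u : ℤ × ℤ) : ℤ × ℤ :=
  if b then (m * u.2 - u.1, u.2) else (u.1, m * u.1 - u.2)

def CC (m : ℤ) (b : Bool) (u : ℤ × ℤ) : ℤ :=
  if b then m * u.2 - 2 * u.1 else m * u.1 - 2 * u.2

def PP (m : ℤ) (u : ℤ × ℤ) : Prop :=
  0 < u.1 ∧ 0 < u.2 ∧ u.1 * u.1 + u.2 * u.2 < m * (u.1 * u.2)

def SS (m : ℤ) (u w : ℤ × ℤ) : Prop := ∃ b, CC m b u < 0 ∧ w = RR m b u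

lemma PP_RR (m : ℤ) (b : Bool) (u : ℤ × ℤ) (h : PP m u) : PP m (RR m b u) := by
  obtain ⟨x, y⟩ := u
  obtain ⟨h1, h2, h3⟩ := h
  simp only at h1 h2 h3
  cases b
  · refine ⟨h1, ?_, ?_⟩
    · simp only [RR, Bool.false_eq_true, if_false]
      by_contra hc
      nlinarith [mul_nonneg h2.le (sub_nonneg.2 (not_lt.1 hc)), mul_pos h1 h1]
    · simp only [RR, Bool.false_eq_true, if_false]
      nlinarith
  · refine ⟨?_, h2, ?_⟩
    · simp only [RR, if_true]
      by_contra hc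
      nlinarith [mul_nonneg h1.le (sub_nonneg.2 (not_lt.1 hc)), mul_pos h2 h2]
    · simp only [RR, if_true]
      nlinarith

lemma CC_RR (m : ℤ) (b : Bool) (u : ℤ × ℤ) : CC m b (RR m b u) = - CC m b u := by
  cases b <;> simp [CC, RR] <;> ring

lemma RR_RR (m : ℤ) (b : Bool) (u : ℤ × ℤ) : RR m b (RR m b u) = u := by
  cases b <;> simp [RR]

lemma RR_fix (m : ℤ) (b : Bool) (u : ℤ × ℤ) (h : CC m b u = 0) : RR m b u = u := by
  obtain ⟨x, y⟩ := u
  cases b <;> simp [RR, CC] at * <;> linarith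

lemma CC_excl (m : ℤ) (hm : 3 ≤ m) (u : ℤ × ℤ) (h : PP m u) (b c : Bool)
    (hb : CC m b u < 0) (hc : CC m c u < 0) : b = c := by
  obtain ⟨x, y⟩ := u
  obtain ⟨h1, h2, h3⟩ := h
  simp only at h1 h2 h3
  cases b <;> cases c <;> simp [CC] at * <;>
  nlinarith [mul_le_mul_of_nonneg_right hm h1.le, mul_le_mul_of_nonneg_right hm h2.le]

lemma desc_closed (m : ℤ) (hm : 3 ≤ m) (w : ℤ × ℤ) (hw : ∀ b, 0 ≤ CC m b w) (u : ℤ × ℤ)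
    (hu : PP m u) (h : Relation.ReflTransGen (SS m) u w) (b : Bool) :
    Relation.ReflTransGen (SS m) (RR m b u) w := by
  rcases lt_trichotomy (CC m b u) 0 with hl | he | hg
  · rcases Relation.ReflTransGen.cases_head h with rfl | ⟨c, ⟨b', hb', rfl⟩, hd⟩
    · exact absurd hl (not_lt.2 (hw b))
    · rw [CC_excl m hm u hu b b' hl hb']; exact hd
  · rw [RR_fix m b u he]; exact h
  · refine Relation.ReflTransGen.head ⟨b, ?_, (RR_RR m b u).symm⟩ h
    rw [CC_RR]; linarith

lemma exists_desc (m : ℤ) (n : ℕ) : ∀ u : ℤ × ℤ, PP m u → u.1 + u.2 ≤ n →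
    ∃ w, (∀ b, 0 ≤ CC m b w) ∧ Relation.ReflTransGen (SS m) u w := by
  induction n with
  | zero => intro u hu h; have := hu.1; have := hu.2.1; push_cast at h; omega
  | succ n ih =>
    intro u hu h
    by_cases hc : ∀ b, 0 ≤ CC m b u
    · exact ⟨u, hc, .refl⟩
    · push Not at hc
      obtain ⟨b, hb⟩ := hc
      obtain ⟨w, hw, hd⟩ := ih (RR m b u) (PP_RR m b u hu) (by
        push_cast at h
        cases b <;> simp [RR, CC] at * <;> linarith)
      exact ⟨w, hw, .head ⟨b, hb, rfl⟩ hd⟩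

lemma desc_list (m : ℤ) (u w : ℤ × ℤ) (h : Relation.ReflTransGen (SS m) u w) :
    ∃ l : List Bool, w = l.foldl (fun u b => RR m b u) u := by
  induction h with
  | refl => exact ⟨[], rfl⟩
  | tail _ hs ih =>
    obtain ⟨l, rfl⟩ := ih
    obtain ⟨b, -, rfl⟩ := hs
    exact ⟨l ++ [b], by simp⟩

lemma list_desc (m : ℤ) (hm : 3 ≤ m) (w : ℤ × ℤ) (hw : ∀ b, 0 ≤ CC m b w) (l : List Bool) :
    ∀ u : ℤ × ℤ, PP m u → Relation.ReflTransGen (SS m) u w →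
    Relation.ReflTransGen (SS m) (l.foldl (fun u b => RR m b u) u) w := by
  induction l with
  | nil => intro u _ h; exact h
  | cons b l ih =>
    intro u hu h
    exact ih _ (PP_RR m b u hu) (desc_closed m hm w hw u hu h b)

/-- Proposition/Definition 6.5 and Proposition 6.7 of
Bayer–Macrì. Fix `m ≥ 3` and equip `ℤ²` with the bilinear form with Gram
matrix `((−2, m), (m, −2))` in the basis `s = (1,0)`, `t = (0,1)`. Consider
the reflections `ρ_s(w) = w + B(w,s)·s` and `ρ_t(w) = w + B(w,t)·t`, and the
group they generate.  Since `ρ_s` and `ρ_t` are involutions, the orbit of a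
vector `v` under this group is the set of vectors obtained from `v` by
finitely many applications of `ρ_s` and `ρ_t`.  Then for every `v = (x,y)`
with `B(v,v) > 0` and `x > 0`, this orbit contains exactly one element `v₀`
with `B(v₀,s) ≥ 0` and `B(v₀,t) ≥ 0` (the minimal class of the orbit). -/
theorem stmt_8 (m : ℤ) (hm : 3 ≤ m)
    (B : ℤ × ℤ → ℤ × ℤ → ℤ)
    (hB : ∀ u w : ℤ × ℤ,
      B u w = -2 * u.1 * w.1 + m * (u.1 * w.2 + u.2 * w.1) - 2 * u.2 * w.2)
    (ρs ρt : ℤ × ℤ → ℤ × ℤ)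
    (hρs : ∀ w_ : ℤ × ℤ, ρs w_ = w_ + (B w_ (1, 0)) • ((1 : ℤ), (0 : ℤ)))
    (hρt : ∀ w_ : ℤ × ℤ, ρt w_ = w_ + (B w_ (0, 1)) • ((0 : ℤ), (1 : ℤ)))
    (v : ℤ × ℤ) (hv : 0 < B v v) (hx : 0 < v.1) :
    ∃! v₀ : ℤ × ℤ,
      (∃ l : List Bool,
        v₀ = l.foldl (fun u b => if b then ρs u else ρt u) v) ∧
      0 ≤ B v₀ (1, 0) ∧ 0 ≤ B v₀ (0, 1) := by
  have hs : (fun (u : ℤ × ℤ) (b : Bool) => if b then ρs u else ρt u) = fun u b => RR m b u := by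
    funext u b
    cases b
    · simp only [Bool.false_eq_true, if_false, hρt, hB, RR]
      ext <;> simp <;> ring
    · simp only [if_true, hρs, hB, RR]
      ext <;> simp <;> ring
  have hC : ∀ w, (0 ≤ B w (1, 0) ∧ 0 ≤ B w (0, 1)) ↔ ∀ b, 0 ≤ CC m b w := by
    intro w
    have e1 : B w (1, 0) = CC m true w := by simp [hB, CC]; ring
    have e2 : B w (0, 1) = CC m false w := by simp [hB, CC]
    rw [e1, e2, Bool.forall_bool, and_comm]
  have hP : PP m v := by
    obtain ⟨x, y⟩ := v
    rw [hB] at hv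
    simp only at hv hx
    refine ⟨hx, ?_, ?_⟩
    · by_contra hc
      simp only [not_lt] at hc
      have := mul_nonneg (mul_nonneg (by linarith : (0 : ℤ) ≤ m) hx.le) (neg_nonneg.2 hc)
      nlinarith [mul_pos hx hx, mul_self_nonneg y]
    · simp only
      nlinarith
  simp only [hs, hC]
  obtain ⟨w, hw, hd⟩ := exists_desc m (v.1 + v.2).toNat v hP (Int.self_le_toNat _)
  refine ⟨w, ⟨desc_list m v w hd, hw⟩, ?_⟩
  rintro z ⟨⟨l, rfl⟩, hz⟩
  rcases Relation.ReflTransGen.cases_head (list_desc m hm w hw l v hP hd) with h | ⟨c, ⟨b, hb, -⟩, -⟩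
  · exact h
  · exact absurd hb (not_lt.2 (hz b))
end

section
/- Let M = ℤ² be regarded as a lattice in ℝ², and let C ⊆ ℝ² be a convex cone containing no line (i.e. salient: if w ∈ C and w ≠ 0 then −w ∉ C). Let v ∈ M ∩ C be a primitive lattice vector, and suppose v = a + b with a, b ∈ M ∩ C. Then there exist a', b' ∈ M ∩ C with a' + b' = v such that the parallelogram with vertices 0, a', v, b' — i.e. the set {λ·a' + μ·b' : λ, μ ∈ [0,1]} — contains no lattice points of M other than 0, a', v and b'. -/
lemma aux_bezout (v : ℤ × ℤ)
    (hprim : ¬ ∃ (k : ℤ) (w : ℤ × ℤ), 2 ≤ k ∧ v = k • w) :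
    ∃ x y : ℤ, v.1 * x + v.2 * y = 1 := by
  have hg : Int.gcd v.1 v.2 = 1 := by
    by_contra hne
    apply hprim
    rcases Nat.eq_zero_or_pos (Int.gcd v.1 v.2) with h0 | hpos
    · rw [Int.gcd_eq_zero_iff] at h0
      exact ⟨2, 0, le_refl _, by ext <;> simp [h0.1, h0.2]⟩
    · obtain ⟨c, hc⟩ := Int.gcd_dvd_left (a := v.1) (b := v.2)
      obtain ⟨e, he⟩ := Int.gcd_dvd_right (a := v.1) (b := v.2)
      refine ⟨(Int.gcd v.1 v.2 : ℤ), (c, e), by omega, ?_⟩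
      ext
      · simpa using hc
      · simpa using he
  refine ⟨Int.gcdA v.1 v.2, Int.gcdB v.1 v.2, ?_⟩
  rw [← Int.gcd_eq_gcd_ab, hg]; rfl

lemma aux_int01 (n : ℤ) (t : ℝ) (h : (n : ℝ) = t) (h0 : 0 ≤ t) (h1 : t ≤ 1) :
    n = 0 ∨ n = 1 := by
  rw [← h] at h0 h1
  have h0' : 0 ≤ n := by exact_mod_cast h0
  have h1' : n ≤ 1 := by exact_mod_cast h1
  omega

lemma aux_pos (C : Set (ℝ × ℝ))
    (hadd : ∀ x ∈ C, ∀ y ∈ C, x + y ∈ C)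
    (hsmul : ∀ x ∈ C, ∀ t : ℝ, 0 < t → t • x ∈ C)
    (ι : ℤ × ℤ → ℝ × ℝ) (hι : ∀ p : ℤ × ℤ, ι p = ((p.1 : ℝ), (p.2 : ℝ)))
    (v : ℤ × ℤ) (x y : ℤ) (hxy : v.1 * x + v.2 * y = 1)
    (a b : ℤ × ℤ) (ha : ι a ∈ C) (hb : ι b ∈ C) (hab : a + b = v)
    (hd : 0 < a.1 * v.2 - a.2 * v.1) :
    ∃ a' b' : ℤ × ℤ, ι a' ∈ C ∧ ι b' ∈ C ∧ a' + b' = v ∧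
      ∀ p : ℤ × ℤ,
        (∃ lam mu : ℝ, 0 ≤ lam ∧ lam ≤ 1 ∧ 0 ≤ mu ∧ mu ≤ 1 ∧
          ι p = lam • ι a' + mu • ι b') →
        p = 0 ∨ p = a' ∨ p = v ∨ p = b' := by
  have comb : ∀ s t : ℝ, 0 ≤ s → 0 < t → ∀ X ∈ C, ∀ Y ∈ C, s • X + t • Y ∈ C := by
    intro s t hs ht X hX Y hY
    rcases hs.eq_or_lt with rfl | hs
    · simpa using hsmul Y hY t ht
    · exact hadd _ (hsmul X hX s hs) _ (hsmul Y hY t ht)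
  obtain ⟨a1, a2⟩ := a
  obtain ⟨b1, b2⟩ := b
  obtain ⟨v1, v2⟩ := v
  simp only [Prod.mk_add_mk, Prod.mk.injEq] at hab hd hxy
  obtain ⟨hv1, hv2⟩ := hab
  obtain ⟨d, hdd⟩ : ∃ d, d = a1 * v2 - a2 * v1 := ⟨_, rfl⟩
  rw [← hdd] at hd
  obtain ⟨k, hk⟩ : ∃ k, k = a1 * x + a2 * y := ⟨_, rfl⟩
  obtain ⟨r, m, hr0, hrd, hm⟩ : ∃ r m : ℤ, 0 ≤ r ∧ r < d ∧ k + r = d * m := by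
    refine ⟨(-k) % d, -((-k) / d), Int.emod_nonneg _ hd.ne', Int.emod_lt_of_pos _ hd, ?_⟩
    have := Int.emod_add_mul_ediv (-k) d
    linarith
  obtain ⟨p1, hp1⟩ : ∃ p1, p1 = y + m * v1 := ⟨_, rfl⟩
  obtain ⟨p2, hp2⟩ : ∃ p2, p2 = -x + m * v2 := ⟨_, rfl⟩
  have e1 : d * p1 = a1 + r * v1 := by
    subst hp1
    linear_combination y * hdd - v1 * hm + v1 * hk + a1 * hxy
  have e2 : d * p2 = a2 + r * v2 := by
    subst hp2
    linear_combination (-x) * hdd - v2 * hm + v2 * hk + a2 * hxy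
  have hdet : p1 * v2 - p2 * v1 = 1 := by
    subst hp1 hp2; linear_combination hxy
  have hdR : (0:ℝ) < d := by exact_mod_cast hd
  have hr0R : (0:ℝ) ≤ r := by exact_mod_cast hr0
  have hrdR : (r:ℝ) + 1 ≤ d := by exact_mod_cast hrd
  have e1R : (d:ℝ) * p1 = a1 + r * v1 := by exact_mod_cast e1
  have e2R : (d:ℝ) * p2 = a2 + r * v2 := by exact_mod_cast e2
  have v1R : (a1:ℝ) + b1 = v1 := by exact_mod_cast hv1
  have v2R : (a2:ℝ) + b2 = v2 := by exact_mod_cast hv2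
  have hdetR : (p1:ℝ) * v2 - p2 * v1 = 1 := by exact_mod_cast hdet
  rw [hι] at ha hb
  refine ⟨(p1, p2), (v1 - p1, v2 - p2), ?_, ?_, by simp, ?_⟩
  · have := comb (r / d) ((r + 1) / d) (by positivity) (by positivity) _ hb _ ha
    rw [hι]
    convert this using 1
    ext <;> simp <;> field_simp
    · linear_combination e1R - r * v1R
    · linear_combination e2R - r * v2R
  · have := comb ((d - r - 1) / d) ((d - r) / d) (div_nonneg (by linarith) hdR.le)
      (div_pos (by linarith) hdR) _ ha _ hb
    rw [hι]
    convert this using 1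
    ext <;> simp <;> field_simp
    · linear_combination -e1R - (d - r) * v1R
    · linear_combination -e2R - (d - r) * v2R
  · rintro ⟨q1, q2⟩ ⟨lam, mu, hl0, hl1, hm0, hm1, h⟩
    simp only [hι, Prod.smul_mk, Prod.mk_add_mk, Prod.mk.injEq, smul_eq_mul, Int.cast_sub] at h
    obtain ⟨h1, h2⟩ := h
    have hL := aux_int01 (q1 * (v2 - p2) - q2 * (v1 - p1)) lam (by
      push_cast
      linear_combination ((v2:ℝ) - p2) * h1 - ((v1:ℝ) - p1) * h2 + lam * hdetR) hl0 hl1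
    have hM := aux_int01 (p1 * q2 - p2 * q1) mu (by
      push_cast
      linear_combination (p1:ℝ) * h2 - (p2:ℝ) * h1 + mu * hdetR) hm0 hm1
    obtain ⟨L, hLd⟩ : ∃ L, L = q1 * (v2 - p2) - q2 * (v1 - p1) := ⟨_, rfl⟩
    obtain ⟨M, hMd⟩ : ∃ M, M = p1 * q2 - p2 * q1 := ⟨_, rfl⟩
    rw [← hLd] at hL
    rw [← hMd] at hM
    have f1 : q1 = L * p1 + M * (v1 - p1) := by
      rw [hLd, hMd]; linear_combination (-q1) * hdet
    have f2 : q2 = L * p2 + M * (v2 - p2) := by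
      rw [hLd, hMd]; linear_combination (-q2) * hdet
    clear hLd hMd
    rcases hL with rfl | rfl <;> rcases hM with rfl | rfl
    · left; simp [f1, f2]
    · right; right; right; simp [f1, f2]
    · right; left; simp [f1, f2]
    · right; right; left; simp [f1, f2]

/-- Lemma 9.2 of Bayer–Macrì.
Let `C ⊆ ℝ²` be a convex cone (closed under addition and positive scalar
multiplication) containing no line, and view `ℤ²` as a lattice in `ℝ²` via
`ι (p₁, p₂) = ((p₁ : ℝ), (p₂ : ℝ))`. If a primitive lattice vector
`v ∈ ℤ² ∩ C` can be written as `v = a + b` with `a, b ∈ ℤ² ∩ C`, then it can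
be written as `v = a' + b'` with `a', b' ∈ ℤ² ∩ C` such that the
parallelogram `{λ·a' + μ·b' : λ, μ ∈ [0,1]}` contains no lattice point other
than `0, a', v, b'`. -/
theorem stmt_11 (C : Set (ℝ × ℝ))
    (hadd : ∀ x ∈ C, ∀ y ∈ C, x + y ∈ C)
    (hsmul : ∀ x ∈ C, ∀ t : ℝ, 0 < t → t • x ∈ C)
    (hline : ∀ x ∈ C, x ≠ 0 → -x ∉ C)
    (ι : ℤ × ℤ → ℝ × ℝ) (hι : ∀ p : ℤ × ℤ, ι p = ((p.1 : ℝ), (p.2 : ℝ)))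
    (v : ℤ × ℤ)
    (hprim : ¬ ∃ (k : ℤ) (w : ℤ × ℤ), 2 ≤ k ∧ v = k • w)
    (hv : ι v ∈ C)
    (a b : ℤ × ℤ) (ha : ι a ∈ C) (hb : ι b ∈ C) (hab : a + b = v) :
    ∃ a' b' : ℤ × ℤ, ι a' ∈ C ∧ ι b' ∈ C ∧ a' + b' = v ∧
      ∀ p : ℤ × ℤ,
        (∃ lam mu : ℝ, 0 ≤ lam ∧ lam ≤ 1 ∧ 0 ≤ mu ∧ mu ≤ 1 ∧
          ι p = lam • ι a' + mu • ι b') →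
        p = 0 ∨ p = a' ∨ p = v ∨ p = b' := by
  obtain ⟨x, y, hxy⟩ := aux_bezout v hprim
  rcases lt_trichotomy (a.1 * v.2 - a.2 * v.1) 0 with hd | hd | hd
  · refine aux_pos C hadd hsmul ι hι v x y hxy b a hb ha (by rw [add_comm]; exact hab) ?_
    subst hab
    simp only [Prod.fst_add, Prod.snd_add] at hd ⊢
    linarith
  · have h0 : ι 0 ∈ C := by
      obtain ⟨s, hs⟩ : ∃ s, s = a.1 * x + a.2 * y := ⟨_, rfl⟩
      have has : a = s • v := by
        ext
        · simp only [Prod.smul_fst, smul_eq_mul]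
          linear_combination (-a.1) * hxy + y * hd - v.1 * hs
        · simp only [Prod.smul_snd, smul_eq_mul]
          linear_combination (-a.2) * hxy - x * hd - v.2 * hs
      have hbs : b = (1 - s) • v := by
        rw [sub_smul, one_smul, ← has, ← hab]; simp
      have hvne : ι v ≠ 0 := by
        intro h
        rw [hι, Prod.mk_eq_zero] at h
        have h1 : v.1 = 0 := by exact_mod_cast h.1
        have h2 : v.2 = 0 := by exact_mod_cast h.2
        rw [h1, h2] at hxy
        simp at hxy
      have key : ∀ n : ℤ, n < 0 → ι (n • v) ∉ C := by
        intro n hn hmem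
        have hnR : (n:ℝ) < 0 := by exact_mod_cast hn
        apply hline _ hv hvne
        have := hsmul _ hmem (1 / (-n)) (by apply one_div_pos.mpr; linarith)
        convert this using 1
        have hn0 : (n:ℝ) ≠ 0 := hnR.ne
        rw [hι, hι]
        ext <;> simp <;> field_simp
      have hs0 : ¬ s < 0 := fun h => key s h (has ▸ ha)
      have hs1 : ¬ (1 - s) < 0 := fun h => key _ h (hbs ▸ hb)
      have : s = 0 ∨ s = 1 := by omega
      rcases this with rfl | rfl
      · rw [zero_smul] at has
        rwa [has] at ha
      · rw [sub_self, zero_smul] at hbs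
        rwa [hbs] at hb
    refine ⟨0, v, h0, hv, zero_add _, ?_⟩
    rintro p ⟨lam, mu, hl0, hl1, hm0, hm1, h⟩
    simp only [hι, Prod.smul_mk, Prod.mk_add_mk, Prod.mk.injEq, smul_eq_mul, Prod.fst_zero,
      Prod.snd_zero, Int.cast_zero, mul_zero, zero_add] at h
    obtain ⟨h1, h2⟩ := h
    have hxyR : (v.1:ℝ) * x + v.2 * y = 1 := by exact_mod_cast hxy
    have hmu : ((p.1 * x + p.2 * y : ℤ) : ℝ) = mu := by
      push_cast
      linear_combination (x:ℝ) * h1 + (y:ℝ) * h2 + mu * hxyR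
    rcases aux_int01 _ mu hmu hm0 hm1 with hz | hz
    · left
      rw [hz] at hmu
      rw [← hmu] at h1 h2
      ext
      · simpa using h1
      · simpa using h2
    · right; right; left
      rw [hz] at hmu
      rw [← hmu] at h1 h2
      ext
      · simpa using h1
      · simpa using h2
  · exact aux_pos C hadd hsmul ι hι v x y hxy a b ha hb hab hd
end

section
/- Fix an integer m ≥ 3 and set Q(x,y) = −2x² + 2mxy − 2y². If real numbers x, y satisfy Q(x,y) > 0, Q(x−1, y) < −2 and Q(x, y−1) < −2, then 0 < x < 1 and 0 < y < 1. -/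
theorem aux_A (m u v : ℝ) (hm : 3 ≤ m) (hu : 0 ≤ u) (huv : u ≤ v)
    (h0 : v ^ 2 - m * u * v + u ^ 2 < m * (u + v) + m - 2 - 2 * u - 2 * v)
    (h1 : m * v - 2 * u < v ^ 2 - m * u * v + u ^ 2) : False := by
  have a : 2 * v < m * u + m - 2 := by linarith
  have hv : 0 ≤ v := hu.trans huv
  have b : 0 ≤ v * (m * u + m - 2 - 2 * v) := mul_nonneg hv (by linarith)
  have c : 0 ≤ (v - u) * (v + u + 2) := mul_nonneg (by linarith) (by linarith)
  nlinarith

theorem aux_B (m x y : ℝ) (hm : 3 ≤ m) (hx : 0 < x) (hy : 0 < y)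
    (h0 : 0 < m * x * y - x ^ 2 - y ^ 2)
    (h1 : m * x * y - x ^ 2 - y ^ 2 < m * y - 2 * x)
    (h2 : m * x * y - x ^ 2 - y ^ 2 < m * x - 2 * y) : x < 1 := by
  by_contra! h
  rcases lt_or_ge y 1 with hy1 | hy1
  · have a : 0 < (x - 1) * (x - 1 - m * y) := by nlinarith
    have b : 0 < x - 1 - m * y := pos_of_mul_pos_right a (by linarith)
    have c : 0 < x * (x - 1 - m * y) := mul_pos hx b
    nlinarith [sq_nonneg y]
  · rcases le_total x y with hxy | hxy
    · exact aux_A m (x - 1) (y - 1) hm (by linarith) (by linarith)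
        (by linarith) (by linarith)
    · exact aux_A m (y - 1) (x - 1) hm (by linarith) (by linarith)
        (by linarith) (by linarith)

/-- numerical claim in the proof of Proposition 9.4 of
Bayer–Macrì. Fix an integer `m ≥ 3` and set `Q(x,y) = −2x² + 2mxy − 2y²`.
If real numbers `x, y` satisfy `Q(x,y) > 0`, `Q(x−1,y) < −2` and
`Q(x,y−1) < −2`, then `0 < x < 1` and `0 < y < 1`. -/
theorem stmt_14 (m : ℤ) (hm : 3 ≤ m)
    (Q : ℝ → ℝ → ℝ)
    (hQ : ∀ x y : ℝ, Q x y = -2 * x ^ 2 + 2 * (m : ℝ) * x * y - 2 * y ^ 2)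
    (x y : ℝ) (h0 : 0 < Q x y) (h1 : Q (x - 1) y < -2) (h2 : Q x (y - 1) < -2) :
    (0 < x ∧ x < 1) ∧ (0 < y ∧ y < 1) := by
  have hm' : (3 : ℝ) ≤ m := by exact_mod_cast hm
  rw [hQ] at h0 h1 h2
  generalize (m : ℝ) = M at *
  have k0 : 0 < M * x * y - x ^ 2 - y ^ 2 := by linarith
  have k1 : M * x * y - x ^ 2 - y ^ 2 < M * y - 2 * x := by linarith
  have k2 : M * x * y - x ^ 2 - y ^ 2 < M * x - 2 * y := by linarith
  have hs : 0 < x + y := by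
    have : 0 < (M - 2) * (x + y) := by linarith
    exact pos_of_mul_pos_right this (by linarith)
  have hp : 0 < x * y := by
    have : 0 < M * (x * y) := by nlinarith [sq_nonneg x, sq_nonneg y]
    exact pos_of_mul_pos_right this (by linarith)
  have hx : 0 < x := by
    have : 0 < (x + y) * x := by nlinarith [sq_nonneg x]
    exact pos_of_mul_pos_right this hs.le
  have hy : 0 < y := pos_of_mul_pos_right hp hx.le
  exact ⟨⟨hx, aux_B M x y hm' hx hy k0 k1 k2⟩,
    ⟨hy, aux_B M y x hm' hy hx (by linarith) (by linarith) (by linarith)⟩⟩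
end
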